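/- arXiv:2006.16425 — 5 statements merged into one kernel-verified Lean document; each statement's English description precedes it below -/
import Mathlib

section
/- Suppose (Ω,d) is a path metric space, Υ ⊆ Ω is an R-dense subset for some R > 0, and δ ≥ 0 is a constant such that for all pairs x,y ∈ Υ there are rectifiably path-connected sets L(x,y) ⊆ Ω containing x and y satisfying: (1) the sets L(x,y) form δ-slim triangles, i.e. for all x,y,z ∈ Υ, L(x,y) is contained in the δ-neighborhood of L(x,z) ∪ L(z,y); and (2) if x,y ∈ Υ have d(x,y) ≤ 3R, then the diameter of L(x,y) is at most δ. Then Ω is Gromov hyperbolic: there exists δ' ≥ 0 such that (x|z)_w ≥ min{(x|y)_w, (y|z)_w} − δ' for all x,y,z,w ∈ Ω. -/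
/-- A metric space is a *path metric space* if the distance between any two points
equals the infimum of the lengths of (continuous) paths joining them, where the
length of a path `γ : [0,1] → Ω` is its total variation. -/
def IsPathMetricSpace (Ω : Type*) [MetricSpace Ω] : Prop :=
  ∀ x y : Ω, edist x y =
    ⨅ (γ : ℝ → Ω) (_ : ContinuousOn γ (Set.Icc 0 1)) (_ : γ 0 = x) (_ : γ 1 = y),
      eVariationOn γ (Set.Icc 0 1)

/-- The Gromov product `(a|b)_c = (d(a,c) + d(b,c) - d(a,b))/2`. -/
noncomputable def gromovProd {Ω : Type*} [MetricSpace Ω] (a b c : Ω) : ℝ :=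
  (dist a c + dist b c - dist a b) / 2

/-!
For `p ∈ L x y` the Gromov product `(x|y)_p` measures how far `p` is from lying on a geodesic from
`x` to `y`. Everything follows from a bound on it that is uniform in `x`, `y` and `p`.

Subdividing at coarse midpoints bounds it by some `B` for pairs at distance at most, roughly, `2M`,
where `M` depends only on `R` and `δ`. Suppose `p ∈ L x y` has `(x|y)_p > K`; let `c` be the point
at distance `(y|p)_x` from `x` on a coarse geodesic from `x` to `y`, and let `a` and `b` be the
points at distance `M` before and after `c`. By induction on the distance, points of `L x a` and
`L b y` have Gromov product at most `K`, which keeps them away from `p`. Slimness then forces `p`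
to be near `L a b`, so that `(x|y)_p` exceeds `B` by at most a constant independent of `K`. Taking
`K` to be `B` plus that constant gives a contradiction.

Given the bound, connectedness of `L x z` yields a point `p` in it that is close to both `L x w` and
`L w z`, so that `dist p w` is at most `(x|z)_w` up to a constant; slimness puts `p` close to
`L x y` or to `L y z`, whence the hyperbolicity inequality.
-/

section GromovProduct

variable {Ω : Type*} [MetricSpace Ω]

theorem gromovProd_comm (x y w : Ω) : gromovProd x y w = gromovProd y x w := by
  simp only [gromovProd, dist_comm x y, add_comm (dist x w)]

theorem gromovProd_nonneg (x y w : Ω) : 0 ≤ gromovProd x y w := by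
  have := dist_triangle_right x y w
  unfold gromovProd
  linarith

theorem gromovProd_add_gromovProd (x y w : Ω) :
    gromovProd x y w + gromovProd y w x = dist x w := by
  simp only [gromovProd, dist_comm y x, dist_comm w x]
  ring

theorem dist_le_gromovProd_add_dist (x y p : Ω) : dist x p ≤ gromovProd x y p + dist x y := by
  have := dist_triangle x y p
  unfold gromovProd
  linarith

theorem gromovProd_le_add_dist₃ (x y w x' y' w' : Ω) :
    gromovProd x y w ≤ gromovProd x' y' w' + dist x x' + dist y y' + dist w w' := by
  have hx := dist_triangle4_right x w x' w'
  have hy := dist_triangle4_right y w y' w'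
  have hxy := dist_triangle4_left x y x' y'
  unfold gromovProd
  linarith

theorem gromovProd_le_add_dist (x y w w' : Ω) :
    gromovProd x y w ≤ gromovProd x y w' + dist w w' := by
  simpa only [dist_self, add_zero] using gromovProd_le_add_dist₃ x y w x y w'

theorem gromovProd_le_add_gromovProd (x m y p : Ω) :
    gromovProd x y p ≤ gromovProd x m p + gromovProd x y m := by
  have := dist_triangle y m p
  unfold gromovProd
  linarith

theorem gromovProd_le_add_add (x a b y p : Ω) :
    gromovProd x y p ≤ gromovProd a b p + gromovProd x b a + gromovProd x y b := by
  have hxp := dist_triangle x a p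
  have hyp := dist_triangle y b p
  simp only [gromovProd, dist_comm b a]
  linarith

theorem gromovProd_le_of_dist_le {x m y : Ω} {s C : ℝ} (hxm : dist x m ≤ s + C)
    (hmy : dist m y ≤ dist x y - s + C) : gromovProd x y m ≤ C := by
  rw [gromovProd, dist_comm y m]
  linarith

theorem dist_add_gromovProd (x y w p : Ω) :
    dist p w + gromovProd x y p = gromovProd x y w + (gromovProd x w p + gromovProd w y p) := by
  simp only [gromovProd, dist_comm p w, dist_comm y w]
  ring

theorem min_gromovProd_sub_le_of_dense {Υ : Set Ω} {C δ : ℝ} (hdense : ∀ x, ∃ a ∈ Υ, dist x a ≤ C)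
    (h : ∀ x ∈ Υ, ∀ y ∈ Υ, ∀ z ∈ Υ, ∀ w ∈ Υ,
      min (gromovProd x y w) (gromovProd y z w) - δ ≤ gromovProd x z w) (x y z w : Ω) :
    min (gromovProd x y w) (gromovProd y z w) - (δ + 6 * C) ≤ gromovProd x z w := by
  obtain ⟨x', hx', hxx'⟩ := hdense x
  obtain ⟨y', hy', hyy'⟩ := hdense y
  obtain ⟨z', hz', hzz'⟩ := hdense z
  obtain ⟨w', hw', hww'⟩ := hdense w
  have hxy := gromovProd_le_add_dist₃ x y w x' y' w'
  have hyz := gromovProd_le_add_dist₃ y z w y' z' w'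
  have hxz := gromovProd_le_add_dist₃ x' z' w' x z w
  rw [dist_comm x', dist_comm z', dist_comm w'] at hxz
  have hmin : min (gromovProd x y w) (gromovProd y z w) - 3 * C ≤
      min (gromovProd x' y' w') (gromovProd y' z' w') := by
    rw [← min_sub_sub_right]
    exact min_le_min (by linarith) (by linarith)
  linarith [h x' hx' y' hy' z' hz' w' hw']

end GromovProduct

section CoarseInterpolation

variable {Ω : Type*} [MetricSpace Ω]

/-- A subset `Υ` of a metric space is `C`-*coarsely interpolating* if any two points are joined by a
coarse geodesic in `Υ`: up to an error `C` in each of the two distances, `Υ` has a point at every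
intermediate position. -/
def IsCoarselyInterpolating (Υ : Set Ω) (C : ℝ) : Prop :=
  ∀ x y : Ω, ∀ s, 0 ≤ s → s ≤ dist x y →
    ∃ a ∈ Υ, dist x a ≤ s + C ∧ dist a y ≤ dist x y - s + C

namespace IsCoarselyInterpolating

variable {Υ : Set Ω} {C : ℝ}

theorem exists_dist_le (h : IsCoarselyInterpolating Υ C) (x : Ω) : ∃ a ∈ Υ, dist x a ≤ C := by
  obtain ⟨a, ha, hxa, -⟩ := h x x 0 le_rfl dist_nonneg
  exact ⟨a, ha, by simpa only [zero_add] using hxa⟩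

theorem nonneg (h : IsCoarselyInterpolating Υ C) (x : Ω) : 0 ≤ C := by
  obtain ⟨a, -, hxa⟩ := h.exists_dist_le x
  exact dist_nonneg.trans hxa

end IsCoarselyInterpolating

theorem edist_add_edist_le_eVariationOn {E : Type*} [PseudoEMetricSpace E] {γ : ℝ → E}
    {a b t : ℝ} (ht : t ∈ Set.Icc a b) :
    edist (γ a) (γ t) + edist (γ t) (γ b) ≤ eVariationOn γ (Set.Icc a b) := by
  have hsplit := eVariationOn.Icc_add_Icc γ ht.1 ht.2 (Set.mem_univ t)
  simp only [Set.univ_inter] at hsplit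
  rw [← hsplit]
  exact add_le_add (eVariationOn.edist_le γ (Set.left_mem_Icc.2 ht.1) (Set.right_mem_Icc.2 ht.1))
    (eVariationOn.edist_le γ (Set.left_mem_Icc.2 ht.2) (Set.right_mem_Icc.2 ht.2))

namespace IsPathMetricSpace

theorem exists_path_eVariationOn_lt (h : IsPathMetricSpace Ω) (x y : Ω) {ℓ : ℝ}
    (hℓ : dist x y < ℓ) :
    ∃ γ : ℝ → Ω, ContinuousOn γ (Set.Icc 0 1) ∧ γ 0 = x ∧ γ 1 = y ∧
      eVariationOn γ (Set.Icc 0 1) < ENNReal.ofReal ℓ := by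
  have hinf := edist_lt_ofReal.2 hℓ
  rw [h x y] at hinf
  simpa only [iInf_lt_iff, exists_prop] using hinf

theorem exists_dist_eq_dist_lt (h : IsPathMetricSpace Ω) (x y : Ω) {ε s : ℝ} (hε : 0 < ε)
    (hs₀ : 0 ≤ s) (hs : s ≤ dist x y) :
    ∃ m, dist x m = s ∧ dist m y < dist x y - s + ε := by
  obtain ⟨γ, hγ, rfl, rfl, hlen⟩ := h.exists_path_eVariationOn_lt x y (lt_add_of_pos_right _ hε)
  have hcont : ContinuousOn (fun t => dist (γ 0) (γ t)) (Set.Icc 0 1) :=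
    (continuous_const.dist continuous_id).comp_continuousOn hγ
  obtain ⟨t, ht, rfl⟩ := intermediate_value_Icc zero_le_one hcont ⟨by rwa [dist_self], hs⟩
  refine ⟨γ t, rfl, ?_⟩
  have hsum := (edist_add_edist_le_eVariationOn ht).trans_lt hlen
  rw [edist_dist, edist_dist, ← ENNReal.ofReal_add dist_nonneg dist_nonneg,
    ENNReal.ofReal_lt_ofReal_iff (by positivity)] at hsum
  linarith

theorem isCoarselyInterpolating (h : IsPathMetricSpace Ω) {Υ : Set Ω} {R ε : ℝ} (hε : 0 < ε)
    (hdense : ∀ x : Ω, ∃ y ∈ Υ, dist x y ≤ R) : IsCoarselyInterpolating Υ (R + ε) := by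
  intro x y s hs₀ hs
  obtain ⟨m, hxm, hmy⟩ := h.exists_dist_eq_dist_lt x y hε hs₀ hs
  obtain ⟨a, ha, hma⟩ := hdense m
  have hxa := dist_triangle x m a
  have hay := dist_triangle_left a y m
  exact ⟨a, ha, by linarith, by linarith⟩

end IsPathMetricSpace

end CoarseInterpolation

section SlimFamily

variable {Ω : Type*} [MetricSpace Ω] {Υ : Set Ω} {L : Ω → Ω → Set Ω} {C D K B δ r : ℝ}

/-- Sets `L x y ∋ x, y`, guessing the geodesics between points of `Υ`, are a `δ`-*slim family* at
scale `r` if they form `δ`-slim triangles and `L x y` has diameter at most `δ` when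
`dist x y ≤ r`. -/
structure IsSlimFamily (Υ : Set Ω) (L : Ω → Ω → Set Ω) (δ r : ℝ) : Prop where
  left_mem : ∀ x ∈ Υ, ∀ y ∈ Υ, x ∈ L x y
  right_mem : ∀ x ∈ Υ, ∀ y ∈ Υ, y ∈ L x y
  slim : ∀ x ∈ Υ, ∀ y ∈ Υ, ∀ z ∈ Υ, ∀ p ∈ L x y, ∃ q ∈ L x z ∪ L z y, dist p q ≤ δ
  diam_le : ∀ x ∈ Υ, ∀ y ∈ Υ, dist x y ≤ r → ∀ p ∈ L x y, ∀ q ∈ L x y, dist p q ≤ δ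

/-- The sets `L x y` are `K`-*taut up to distance* `D` if all their points `p` satisfy
`(x|y)_p ≤ K`, that is `dist x p + dist p y ≤ dist x y + 2 * K`, when `dist x y ≤ D`. -/
def IsTautUpTo (Υ : Set Ω) (L : Ω → Ω → Set Ω) (D K : ℝ) : Prop :=
  ∀ x ∈ Υ, ∀ y ∈ Υ, dist x y ≤ D → ∀ p ∈ L x y, gromovProd x y p ≤ K

theorem IsTautUpTo.mono {D' : ℝ} (h : IsTautUpTo Υ L D K) (hD : D' ≤ D) : IsTautUpTo Υ L D' K :=
  fun x hx y hy hxy => h x hx y hy (hxy.trans hD)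

theorem IsTautUpTo.swap (h : IsTautUpTo Υ L D K) : IsTautUpTo Υ (fun x y => L y x) D K :=
  fun x hx y hy hxy p hp =>
    gromovProd_comm x y p ▸ h y hy x hx ((dist_comm y x).trans_le hxy) p hp

namespace IsSlimFamily

theorem nonneg (hL : IsSlimFamily Υ L δ r) {x : Ω} (hx : x ∈ Υ) : 0 ≤ δ := by
  obtain ⟨q, -, hq⟩ := hL.slim x hx x hx x hx x (hL.left_mem x hx x hx)
  exact dist_nonneg.trans hq

theorem swap (hL : IsSlimFamily Υ L δ r) : IsSlimFamily Υ (fun x y => L y x) δ r where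
  left_mem x hx y hy := hL.right_mem y hy x hx
  right_mem x hx y hy := hL.left_mem y hy x hx
  slim x hx y hy z hz p hp := by
    simpa only [Set.union_comm] using hL.slim y hy x hx z hz p hp
  diam_le x hx y hy hxy := hL.diam_le y hy x hx ((dist_comm y x).trans_le hxy)

theorem isTautUpTo (hL : IsSlimFamily Υ L δ r) : IsTautUpTo Υ L r δ := by
  intro x hx y hy hxy p hp
  have hxp := hL.diam_le x hx y hy hxy x (hL.left_mem x hx y hy) p hp
  have hyp := hL.diam_le x hx y hy hxy y (hL.right_mem x hx y hy) p hp
  have := dist_nonneg (x := x) (y := y)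
  unfold gromovProd
  linarith

theorem isTautUpTo_double (hL : IsSlimFamily Υ L δ r) (hC : IsCoarselyInterpolating Υ C)
    (h : IsTautUpTo Υ L D K) : IsTautUpTo Υ L (2 * (D - C)) (K + C + δ) := by
  intro x hx y hy hxy p hp
  have hxy₀ := dist_nonneg (x := x) (y := y)
  obtain ⟨m, hm, hxm, hmy⟩ := hC x y (dist x y / 2) (by linarith) (by linarith)
  have hmid : gromovProd x y m ≤ C := gromovProd_le_of_dist_le hxm hmy
  obtain ⟨q, hq, hpq⟩ := hL.slim x hx y hy m hm p hp
  have hxyq : gromovProd x y q ≤ K + C := by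
    rcases hq with hq | hq
    · have := h x hx m hm (by linarith) q hq
      linarith [gromovProd_le_add_gromovProd x m y q]
    · have := h m hm y hy (by linarith) q hq
      rw [gromovProd_comm] at this hmid ⊢
      linarith [gromovProd_le_add_gromovProd y m x q]
  linarith [gromovProd_le_add_dist x y p q]

theorem exists_isTautUpTo (hL : IsSlimFamily Υ L δ r) (hC : IsCoarselyInterpolating Υ C)
    (hr : 2 * C < r) (D : ℝ) : ∃ B, IsTautUpTo Υ L D B := by
  have hdouble (n : ℕ) : ∃ B, IsTautUpTo Υ L (2 * C + 2 ^ n * (r - 2 * C)) B := by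
    induction n with
    | zero => exact ⟨δ, by simpa only [pow_zero, one_mul, add_sub_cancel] using hL.isTautUpTo⟩
    | succ n ih =>
      obtain ⟨B, hB⟩ := ih
      refine ⟨B + C + δ, ?_⟩
      convert hL.isTautUpTo_double hC hB using 1
      ring
  obtain ⟨n, hn⟩ := pow_unbounded_of_one_lt ((D - 2 * C) / (r - 2 * C)) one_lt_two
  rw [div_lt_iff₀ (sub_pos.2 hr)] at hn
  obtain ⟨B, hB⟩ := hdouble n
  exact ⟨B, hB.mono (by linarith)⟩

/-- Negative `s` is allowed, with `a = x`, so that points projecting close to an end of `L x y` need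
no separate treatment. -/
theorem exists_cut (hL : IsSlimFamily Υ L δ r) (hC : IsCoarselyInterpolating Υ C) {s : ℝ}
    (hK : IsTautUpTo Υ L (s + C) K) {x y p : Ω} (hx : x ∈ Υ) (hy : y ∈ Υ) (hp : p ∈ L x y)
    (hs : s ≤ dist x y) (hxp : s + C + K + δ < dist x p) :
    ∃ a ∈ Υ, dist x a ≤ max s 0 + C ∧ dist a y ≤ dist x y - max s 0 + C ∧
      ∃ q ∈ L a y, dist p q ≤ δ := by
  rcases le_total s 0 with hs₀ | hs₀
  · have hC₀ := hC.nonneg x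
    rw [max_eq_right hs₀]
    exact ⟨x, hx, by simpa using hC₀, by linarith, p, hp, by simpa using hL.nonneg hx⟩
  · rw [max_eq_left hs₀]
    obtain ⟨a, ha, hxa, hay⟩ := hC x y s hs₀ hs
    obtain ⟨q, hq | hq, hpq⟩ := hL.slim x hx y hy a ha p hp
    · have hxaq := hK x hx a ha hxa q hq
      have hxq := dist_le_gromovProd_add_dist x a q
      linarith [dist_triangle_right x p q]
    · exact ⟨a, ha, hxa, hay, q, hq, hpq⟩

theorem exists_two_sided_cut (hL : IsSlimFamily Υ L δ r) (hC : IsCoarselyInterpolating Υ C)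
    {M : ℝ} (hM : C + 2 * δ ≤ M) {x y p : Ω} (hK : IsTautUpTo Υ L (dist x y - M + C) K)
    (hx : x ∈ Υ) (hy : y ∈ Υ) (hp : p ∈ L x y) (hxyp : K < gromovProd x y p) :
    ∃ a ∈ Υ, ∃ b ∈ Υ, dist a b ≤ 2 * M + 2 * C ∧ gromovProd x b a ≤ C ∧ gromovProd x y b ≤ C ∧
      ∃ q ∈ L a b, dist p q ≤ 2 * δ := by
  have hC₀ := hC.nonneg x
  have hδ := hL.nonneg hx
  -- `c₁` and `c₂` are the positions of the projection of `p`, measured from `x` and from `y`.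
  set c₁ := gromovProd y p x
  set c₂ := gromovProd p x y
  have hc₁ : 0 ≤ c₁ := gromovProd_nonneg y p x
  have hc₂ : 0 ≤ c₂ := gromovProd_nonneg p x y
  have hxp : gromovProd x y p + c₁ = dist x p := gromovProd_add_gromovProd x y p
  have hyx : c₁ + c₂ = dist y x := gromovProd_add_gromovProd y p x
  have hpy : c₂ + gromovProd x y p = dist p y := gromovProd_add_gromovProd p x y
  rw [dist_comm] at hyx hpy
  obtain ⟨b, hb, hyb, hbx, q, hq, hpq⟩ :=
    hL.swap.exists_cut hC (s := c₂ - M) (hK.mono (by linarith)).swap hy hx hp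
      (by rw [dist_comm]; linarith) (by linarith)
  rw [dist_comm y b] at hyb
  rw [dist_comm b x, dist_comm y x] at hbx
  have hmax : max (c₂ - M) 0 ≤ c₂ := max_le (by linarith) hc₂
  obtain ⟨a, ha, hxa, hab, q', hq', hqq'⟩ :=
    hL.exists_cut hC (s := c₁ - M) (hK.mono (by linarith)) hx hb hq
      (by linarith [dist_triangle x b y]) (by linarith [dist_triangle_right x p q])
  refine ⟨a, ha, b, hb, ?_, gromovProd_le_of_dist_le hxa hab,
    gromovProd_le_of_dist_le (s := dist x y - max (c₂ - M) 0) hbx (by linarith), q', hq', ?_⟩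
  · linarith [le_max_left (c₁ - M) 0, le_max_left (c₂ - M) 0]
  · linarith [dist_triangle p q q']

theorem isTautUpTo_extend (hL : IsSlimFamily Υ L δ r) (hC : IsCoarselyInterpolating Υ C) {M : ℝ}
    (hM : C + 2 * δ ≤ M) (hB : IsTautUpTo Υ L (2 * M + 2 * C) B)
    (hD : IsTautUpTo Υ L D (B + 2 * C + 2 * δ)) :
    IsTautUpTo Υ L (D + (M - C)) (B + 2 * C + 2 * δ) := by
  intro x hx y hy hxy p hp
  by_contra! hxyp
  obtain ⟨a, ha, b, hb, hab, hxba, hxyb, q, hq, hpq⟩ :=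
    hL.exists_two_sided_cut hC hM (hD.mono (by linarith)) hx hy hp hxyp
  have habq := hB a ha b hb hab q hq
  linarith [gromovProd_le_add_dist x y p q, gromovProd_le_add_add x a b y q]

theorem exists_forall_gromovProd_le (hL : IsSlimFamily Υ L δ r)
    (hC : IsCoarselyInterpolating Υ C) (hr : 2 * C < r) :
    ∃ K, ∀ x ∈ Υ, ∀ y ∈ Υ, ∀ p ∈ L x y, gromovProd x y p ≤ K := by
  rcases Υ.eq_empty_or_nonempty with rfl | ⟨o, ho⟩
  · exact ⟨0, fun x hx => hx.elim⟩
  have hC₀ := hC.nonneg o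
  have hδ := hL.nonneg ho
  set M := r + 2 * δ
  obtain ⟨B, hB⟩ := hL.exists_isTautUpTo hC hr (2 * M + 2 * C)
  have htaut (n : ℕ) : IsTautUpTo Υ L (n * (M - C)) (B + 2 * C + 2 * δ) := by
    induction n with
    | zero =>
      intro x hx y hy hxy p hp
      rw [Nat.cast_zero, zero_mul] at hxy
      linarith [hB x hx y hy (by linarith) p hp]
    | succ n ih =>
      rw [Nat.cast_succ, add_one_mul]
      exact hL.isTautUpTo_extend hC (by linarith) hB ih
  refine ⟨B + 2 * C + 2 * δ, fun x hx y hy p hp => ?_⟩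
  obtain ⟨n, hn⟩ := exists_nat_ge (dist x y / (M - C))
  exact htaut n x hx y hy ((div_le_iff₀ (by linarith)).1 hn) p hp

theorem exists_near_both (hL : IsSlimFamily Υ L δ r) {x y w : Ω} (hx : x ∈ Υ) (hy : y ∈ Υ)
    (hw : w ∈ Υ) (hconn : IsPreconnected (L x y)) :
    ∃ p ∈ L x y, (∃ q ∈ L x w, dist p q < δ + 1) ∧ ∃ q ∈ L w y, dist p q < δ + 1 := by
  have hcover : L x y ⊆ Metric.cthickening δ (L x w) ∪ Metric.cthickening δ (L w y) := by
    intro p hp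
    obtain ⟨q, hq | hq, hpq⟩ := hL.slim x hx y hy w hw p hp
    · exact .inl (Metric.mem_cthickening_of_dist_le p q δ _ hq hpq)
    · exact .inr (Metric.mem_cthickening_of_dist_le p q δ _ hq hpq)
  obtain ⟨p, hp, hpx, hpy⟩ := isPreconnected_closed_iff.1 hconn _ _
    Metric.isClosed_cthickening Metric.isClosed_cthickening hcover
    ⟨x, hL.left_mem x hx y hy, Metric.self_subset_cthickening _ (hL.left_mem x hx w hw)⟩
    ⟨y, hL.right_mem x hx y hy, Metric.self_subset_cthickening _ (hL.right_mem w hw y hy)⟩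
  have hδ : 0 < δ + 1 := by linarith [hL.nonneg hx]
  have hthick (S : Set Ω) : Metric.cthickening δ S ⊆ Metric.thickening (δ + 1) S :=
    Metric.cthickening_subset_thickening' hδ (lt_add_one δ) S
  exact ⟨p, hp, Metric.mem_thickening_iff.1 (hthick _ hpx),
    Metric.mem_thickening_iff.1 (hthick _ hpy)⟩

theorem exists_dist_le_gromovProd_add (hL : IsSlimFamily Υ L δ r)
    (hK : ∀ x ∈ Υ, ∀ y ∈ Υ, ∀ p ∈ L x y, gromovProd x y p ≤ K) {x y w : Ω} (hx : x ∈ Υ)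
    (hy : y ∈ Υ) (hw : w ∈ Υ) (hconn : IsPreconnected (L x y)) :
    ∃ p ∈ L x y, dist p w ≤ gromovProd x y w + 2 * (K + δ + 1) := by
  obtain ⟨p, hp, ⟨q₁, hq₁, hpq₁⟩, q₂, hq₂, hpq₂⟩ := hL.exists_near_both hx hy hw hconn
  refine ⟨p, hp, ?_⟩
  have hxw := gromovProd_le_add_dist x w p q₁
  have hwy := gromovProd_le_add_dist w y p q₂
  linarith [hK x hx w hw q₁ hq₁, hK w hw y hy q₂ hq₂, dist_add_gromovProd x y w p,
    gromovProd_nonneg x y p]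

theorem min_gromovProd_sub_le (hL : IsSlimFamily Υ L δ r)
    (hconn : ∀ x ∈ Υ, ∀ y ∈ Υ, IsPreconnected (L x y))
    (hK : ∀ x ∈ Υ, ∀ y ∈ Υ, ∀ p ∈ L x y, gromovProd x y p ≤ K) {x y z w : Ω} (hx : x ∈ Υ)
    (hy : y ∈ Υ) (hz : z ∈ Υ) (hw : w ∈ Υ) :
    min (gromovProd x y w) (gromovProd y z w) - (3 * (K + δ) + 2) ≤ gromovProd x z w := by
  obtain ⟨p, hp, hpw⟩ := hL.exists_dist_le_gromovProd_add hK hx hz hw (hconn x hx z hz)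
  obtain ⟨q, hq, hpq⟩ := hL.slim x hx z hz y hy p hp
  have hwq : dist w q ≤ dist p w + dist p q := dist_triangle_left w q p
  have hmin : min (gromovProd x y w) (gromovProd y z w) ≤ K + dist w q := by
    rcases hq with hq | hq
    · refine (min_le_left _ _).trans ((gromovProd_le_add_dist x y w q).trans ?_)
      exact add_le_add_left (hK x hx y hy q hq) _
    · refine (min_le_right _ _).trans ((gromovProd_le_add_dist y z w q).trans ?_)
      exact add_le_add_left (hK y hy z hz q hq) _
  linarith

end IsSlimFamily

end SlimFamily

theorem isPreconnected_of_forall_exists_path {X : Type*} [TopologicalSpace X] {S : Set X}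
    (h : ∀ a ∈ S, ∀ b ∈ S, ∃ γ : ℝ → X, ContinuousOn γ (Set.Icc 0 1) ∧ γ 0 = a ∧ γ 1 = b ∧
      ∀ t ∈ Set.Icc (0 : ℝ) 1, γ t ∈ S) : IsPreconnected S := by
  refine isPreconnected_of_forall_pair fun a ha b hb => ?_
  obtain ⟨γ, hγ, rfl, rfl, hS⟩ := h a ha b hb
  exact ⟨γ '' Set.Icc 0 1, Set.image_subset_iff.2 hS,
    Set.mem_image_of_mem γ (Set.left_mem_Icc.2 zero_le_one),
    Set.mem_image_of_mem γ (Set.right_mem_Icc.2 zero_le_one), isPreconnected_Icc.image γ hγ⟩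

theorem guessing_geodesics_general {Ω : Type*} [MetricSpace Ω] {Υ : Set Ω} {C r δ : ℝ}
    (hC : IsCoarselyInterpolating Υ C) (hr : 2 * C < r) {L : Ω → Ω → Set Ω}
    (hL : IsSlimFamily Υ L δ r) (hconn : ∀ x ∈ Υ, ∀ y ∈ Υ, IsPreconnected (L x y)) :
    ∃ δ' : ℝ, 0 ≤ δ' ∧
      ∀ x y z w : Ω,
        min (gromovProd x y w) (gromovProd y z w) - δ' ≤ gromovProd x z w := by
  obtain ⟨K, hK⟩ := hL.exists_forall_gromovProd_le hC hr
  have hhyp := min_gromovProd_sub_le_of_dense hC.exists_dist_le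
    fun x hx y hy z hz w hw => hL.min_gromovProd_sub_le hconn hK hx hy hz hw
  exact ⟨_, le_max_right _ 0, fun x y z w =>
    (sub_le_sub_left (le_max_left _ 0) _).trans (hhyp x y z w)⟩

/-- **Guessing geodesics.** If `Ω` is a path metric space, `Υ ⊆ Ω` is `R`-dense, and for
all pairs `x,y ∈ Υ` there are rectifiably path-connected sets `L(x,y) ∋ x,y` forming
`δ`-slim triangles and having diameter at most `δ` whenever `d(x,y) ≤ 3R`, then `Ω`
is Gromov hyperbolic. -/
theorem guessing_geodesics {Ω : Type*} [MetricSpace Ω]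
    (hpath : IsPathMetricSpace Ω)
    (R : ℝ) (hR : 0 < R)
    (Υ : Set Ω) (hdense : ∀ x : Ω, ∃ y ∈ Υ, dist x y ≤ R)
    (δ : ℝ) (hδ : 0 ≤ δ)
    (L : Ω → Ω → Set Ω)
    (hmem : ∀ x ∈ Υ, ∀ y ∈ Υ, x ∈ L x y ∧ y ∈ L x y)
    (hrect : ∀ x ∈ Υ, ∀ y ∈ Υ, ∀ a ∈ L x y, ∀ b ∈ L x y,
      ∃ γ : ℝ → Ω, ContinuousOn γ (Set.Icc 0 1) ∧ γ 0 = a ∧ γ 1 = b ∧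
        (∀ t ∈ Set.Icc (0 : ℝ) 1, γ t ∈ L x y) ∧
        eVariationOn γ (Set.Icc 0 1) ≠ ⊤)
    (hslim : ∀ x ∈ Υ, ∀ y ∈ Υ, ∀ z ∈ Υ, ∀ p ∈ L x y,
      ∃ q ∈ L x z ∪ L z y, dist p q ≤ δ)
    (hdiam : ∀ x ∈ Υ, ∀ y ∈ Υ, dist x y ≤ 3 * R →
      ∀ p ∈ L x y, ∀ q ∈ L x y, dist p q ≤ δ) :
    ∃ δ' : ℝ, 0 ≤ δ' ∧
      ∀ x y z w : Ω,
        min (gromovProd x y w) (gromovProd y z w) - δ' ≤ gromovProd x z w := by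
  refine guessing_geodesics_general (hpath.isCoarselyInterpolating (ε := R / 4) (by positivity)
    hdense) (by linarith) (r := 3 * R) (L := L) (δ := δ)
    ⟨fun x hx y hy => (hmem x hx y hy).1, fun x hx y hy => (hmem x hx y hy).2, hslim, hdiam⟩ ?_
  intro x hx y hy
  refine isPreconnected_of_forall_exists_path fun a ha b hb => ?_
  obtain ⟨γ, hγ, h₀, h₁, hL, -⟩ := hrect x hx y hy a ha b hb
  exact ⟨γ, hγ, h₀, h₁, hL⟩
end

section
/- For every B > 0 there exist constants K ≥ 1 and C ≥ 0, depending only on B, with the following property. Let X be a connected simple graph such that for each pair of vertices w,w' there exists an edge path γ(w,w') from w to w' so that, for every vertex v on γ(w,w'), every walk in X from w to w' contains a vertex at graph distance at most B from v. Then X is (K,C)-quasi-isometric to a simplicial tree: there exist a connected acyclic simple graph T and a map f from the vertices of X to the vertices of T such that (1/K)·d_X(x,y) − C ≤ d_T(f(x),f(y)) ≤ K·d_X(x,y) + C for all vertices x,y of X, and every vertex of T is within graph distance C of the image of f. -/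
/-!
Fix a vertex `o` and put two vertices in the same layer when they lie on a common sphere about `o`
and are joined by a walk that stays outside the open ball. Contracting every layer gives a tree:
two neighbours of a layer that are closer to `o` are joined through that layer, hence equal, so on
a cycle the two neighbours of a layer farthest from `o` would coincide.

The contraction is a quasi-isometry once layers have bounded diameter. Let `x` and `y` be in one
layer at distance `n` from `o`. A vertex `v` of the bottleneck walk `γ(x, y)` is `B`-close to the
walk outside the ball, hence at distance at least `n - B` from `o`; it is also `B`-close to
the union of two geodesics from `o` to `x` and to `y`. So `v` is `3B`-close to `x` or to `y`.
Somewhere along `γ(x, y)` the nearer end switches, which gives `d(x, y) ≤ 6B + 1`.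
-/

universe u

namespace QuasiTree

open SimpleGraph

section Contraction

variable {V W : Type*} {G : SimpleGraph V}

lemma exists_walk_map_length_le (f : V → W) {x y : V} (p : G.Walk x y) :
    ∃ q : (G.map f).Walk (f x) (f y), q.length ≤ p.length := by
  induction p with
  | nil => exact ⟨.nil, le_rfl⟩
  | @cons a b _ hab p ih =>
    obtain ⟨q, hq⟩ := ih
    by_cases hf : f a = f b
    · exact ⟨q.copy hf.symm rfl, by simpa using hq.trans (Nat.le_succ _)⟩
    · exact ⟨.cons (map_adj_apply' hab hf) q, by simpa using hq⟩

lemma connected_map (hG : G.Connected) {f : V → W} (hf : f.Surjective) :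
    (G.map f).Connected := by
  have : Nonempty W := hG.nonempty.map f
  refine ⟨hf.forall₂.mpr fun x y => ?_⟩
  obtain ⟨p⟩ := hG.preconnected x y
  obtain ⟨q, -⟩ := exists_walk_map_length_le f p
  exact ⟨q⟩

lemma dist_map_le (f : V → W) {x y : V} (hxy : G.Reachable x y) :
    (G.map f).dist (f x) (f y) ≤ G.dist x y := by
  obtain ⟨p, hp⟩ := hxy.exists_walk_length_eq_dist
  obtain ⟨q, hq⟩ := exists_walk_map_length_le f p
  exact (dist_le q).trans (hq.trans_eq hp)

lemma dist_le_of_walk_map (hG : G.Connected) {f : V → W} {D : ℕ}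
    (hD : ∀ x y, f x = f y → G.dist x y ≤ D) {s t : W} (p : (G.map f).Walk s t) {x y : V}
    (hx : f x = s) (hy : f y = t) : G.dist x y ≤ (D + 1) * p.length + D := by
  induction p generalizing x with
  | nil => simpa using hD x y (hx.trans hy.symm)
  | cons hst p ih =>
    obtain ⟨-, a, b, hab, ha, hb⟩ := hst
    calc G.dist x y
        ≤ G.dist x a + (G.dist a b + G.dist b y) :=
          hG.dist_triangle.trans (Nat.add_le_add_left hG.dist_triangle _)
      _ ≤ D + (1 + ((D + 1) * p.length + D)) := by
          gcongr
          · exact hD x a (hx.trans ha.symm)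
          · exact (dist_eq_one_iff_adj.mpr hab).le
          · exact ih hb hy
      _ = (D + 1) * (p.length + 1) + D := by ring

lemma dist_le_mul_dist_map_add (hG : G.Connected) {f : V → W} {D : ℕ}
    (hD : ∀ x y, f x = f y → G.dist x y ≤ D) (x y : V) :
    G.dist x y ≤ (D + 1) * (G.map f).dist (f x) (f y) + D := by
  obtain ⟨p⟩ := hG.preconnected x y
  obtain ⟨q, -⟩ := exists_walk_map_length_le f p
  obtain ⟨r, hr⟩ := q.reachable.exists_walk_length_eq_dist
  exact hr ▸ dist_le_of_walk_map hG hD r rfl rfl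

lemma quasiIsometry_map_of_fiber_dist_le (hG : G.Connected) {f : V → W} {D : ℕ}
    (hD : ∀ x y, f x = f y → G.dist x y ≤ D) (x y : V) :
    1 / ((D : ℝ) + 1) * G.dist x y - D ≤ (G.map f).dist (f x) (f y) ∧
      ((G.map f).dist (f x) (f y) : ℝ) ≤ ((D : ℝ) + 1) * G.dist x y + D := by
  have hlower : (G.dist x y : ℝ) ≤ (D + 1) * (G.map f).dist (f x) (f y) + D :=
    mod_cast dist_le_mul_dist_map_add hG hD x y
  have hupper : ((G.map f).dist (f x) (f y) : ℝ) ≤ G.dist x y :=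
    mod_cast dist_map_le f (hG.preconnected x y)
  constructor
  · rw [sub_le_iff_le_add, one_div, inv_mul_le_iff₀ (by positivity)]
    nlinarith [D.cast_nonneg (α := ℝ)]
  · nlinarith [D.cast_nonneg (α := ℝ), (G.dist x y).cast_nonneg (α := ℝ)]

end Contraction

section Layers

variable {V α : Type*} {G : SimpleGraph V}

lemma isAcyclic_of_subsingleton_adj_le [LinearOrder α] (h : V → α)
    (hh : ∀ s, {t | G.Adj s t ∧ h t ≤ h s}.Subsingleton) : G.IsAcyclic := by
  classical
  intro u c hc
  obtain ⟨m, hm, hmax⟩ := c.support.toFinset.exists_max_image h ⟨u, by simp⟩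
  simp only [List.mem_toFinset] at hm hmax
  have hc' := hc.rotate hm
  have hle (i : ℕ) : h ((c.rotate m hm).getVert i) ≤ h m :=
    hmax _ ((c.mem_support_rotate_iff m hm).mp (Walk.getVert_mem_support _ i))
  exact hc'.snd_ne_penultimate <| hh m
    ⟨(c.rotate m hm).adj_snd hc'.not_nil, hle _⟩
    ⟨((c.rotate m hm).adj_penultimate hc'.not_nil).symm, hle _⟩

/-- The layers of a height function `h` on the vertices of `G`: two vertices of the same height are
equivalent if some walk joins them without going below that height. In other words, a layer
consists of the vertices of height `c` in a connected component of the superlevel set `c ≤ h`. -/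
def layerSetoid [Preorder α] (G : SimpleGraph V) (h : V → α) : Setoid V where
  r x y := h x = h y ∧ ∃ p : G.Walk x y, ∀ v ∈ p.support, h x ≤ h v
  iseqv := by
    refine ⟨fun x => ⟨rfl, .nil, by simp⟩, ?_, ?_⟩
    · rintro x y ⟨hxy, p, hp⟩
      exact ⟨hxy.symm, p.reverse, fun v hv => hxy ▸ hp v (by simpa using hv)⟩
    · rintro x y z ⟨hxy, p, hp⟩ ⟨hyz, q, hq⟩
      refine ⟨hxy.trans hyz, p.append q, fun v hv => ?_⟩
      rcases (p.mem_support_append_iff q).mp hv with hv | hv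
      · exact hp v hv
      · exact hxy ▸ hq v hv

/-- The graph obtained from `G` by contracting each layer of the height function `h` to a point. -/
abbrev layerGraph [Preorder α] (G : SimpleGraph V) (h : V → α) :
    SimpleGraph (Quotient (layerSetoid G h)) :=
  G.map (Quotient.mk (layerSetoid G h))

/-- The common height of the vertices in a layer. -/
def layerHeight [Preorder α] (G : SimpleGraph V) (h : V → α) : Quotient (layerSetoid G h) → α :=
  Quotient.lift h fun _ _ hxy => hxy.1

lemma layerSetoid_of_adj [Preorder α] {h : V → α} {a b : V} (hab : G.Adj a b) (he : h a = h b) :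
    layerSetoid G h a b :=
  ⟨he, hab.toWalk, by simp [he]⟩

lemma exists_adj_lt_of_layerGraph_adj [PartialOrder α] {h : V → α}
    {s t : Quotient (layerSetoid G h)} (hst : (layerGraph G h).Adj s t)
    (hle : layerHeight G h t ≤ layerHeight G h s) :
    ∃ a b, G.Adj a b ∧ ⟦a⟧ = s ∧ ⟦b⟧ = t ∧ h b < h a := by
  obtain ⟨hne, a, b, hab, rfl, rfl⟩ := hst
  have hba : h b ≤ h a := hle
  exact ⟨a, b, hab, rfl, rfl,
    hba.lt_of_ne fun he => hne (Quotient.sound (layerSetoid_of_adj hab he.symm))⟩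

lemma layerSetoid_of_adj_of_le [Preorder α] {h : V → α} {a a' b b' : V}
    (haa' : layerSetoid G h a a') (hab : G.Adj a b) (hab' : G.Adj a' b')
    (hle : h b ≤ h a) (he : h b = h b') : layerSetoid G h b b' := by
  obtain ⟨-, p, hp⟩ := haa'
  refine ⟨he, .cons hab.symm (p.concat hab'), fun v hv => ?_⟩
  simp only [Walk.support_cons, Walk.support_concat, List.mem_cons, List.mem_append,
    List.not_mem_nil, or_false] at hv
  rcases hv with rfl | hv | rfl
  · exact le_rfl
  · exact hle.trans (hp v hv)
  · exact he.le

theorem isAcyclic_layerGraph [LinearOrder α] {h : V → α}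
    (hcov : ∀ a b, G.Adj a b → h a < h b → h a ⋖ h b) : (layerGraph G h).IsAcyclic := by
  refine isAcyclic_of_subsingleton_adj_le (layerHeight G h) fun s => ?_
  rintro t ⟨hst, hle⟩ t' ⟨hst', hle'⟩
  obtain ⟨a, b, hab, rfl, rfl, hlt⟩ := exists_adj_lt_of_layerGraph_adj hst hle
  obtain ⟨a', b', hab', haa', rfl, hlt'⟩ := exists_adj_lt_of_layerGraph_adj hst' hle'
  have hlayer : layerSetoid G h a a' := Quotient.exact haa'.symm
  have hb : h b ⋖ h a := hcov b a hab.symm hlt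
  have hb' : h b' ⋖ h a := hlayer.1 ▸ hcov b' a' hab'.symm hlt'
  exact Quotient.sound (layerSetoid_of_adj_of_le hlayer hab hab' hlt.le (hb.unique_left hb'))

end Layers

section Bottleneck

variable {V : Type*} {G : SimpleGraph V}

lemma dist_covBy_dist_of_adj (o : V) {a b : V} (hab : G.Adj a b) (hlt : G.dist o a < G.dist o b) :
    G.dist o a ⋖ G.dist o b := by
  rw [Nat.covBy_iff_add_one_eq]
  have := hab.diff_dist_adj (u := o)
  omega

lemma dist_add_dist_of_mem_support {o x t : V} {p : G.Walk o x} (hp : p.length = G.dist o x)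
    (ht : t ∈ p.support) : G.dist o t + G.dist t x = G.dist o x := by
  classical
  apply le_antisymm
  · calc G.dist o t + G.dist t x
        ≤ (p.takeUntil t ht).length + (p.dropUntil t ht).length :=
          add_le_add (dist_le _) (dist_le _)
      _ = G.dist o x := by rw [← Walk.length_append, p.take_spec, hp]
  · exact (p.takeUntil t ht).reachable.dist_triangle_left x

lemma dist_le_of_near_geodesic (hG : G.Connected) {o x v t : V} {b c : ℕ} {p : G.Walk o x}
    (hp : p.length = G.dist o x) (ht : t ∈ p.support) (hvt : G.dist v t ≤ b)
    (hv : G.dist o x ≤ G.dist o v + c) : G.dist v x ≤ 2 * b + c := by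
  have hgeod := dist_add_dist_of_mem_support hp ht
  have hovt : G.dist o v ≤ G.dist o t + G.dist t v := hG.dist_triangle
  have hvtx : G.dist v x ≤ G.dist v t + G.dist t x := hG.dist_triangle
  rw [dist_comm (u := t)] at hovt
  omega

lemma dist_le_of_walk_near_ends (hG : G.Connected) {x y : V} {k : ℕ} (p : G.Walk x y)
    (hp : ∀ v ∈ p.support, G.dist v x ≤ k ∨ G.dist v y ≤ k) : G.dist x y ≤ 2 * k + 1 := by
  by_cases hy : G.dist y x ≤ k
  · rw [dist_comm]
    omega
  obtain ⟨d, hd, hfst, hsnd⟩ := p.exists_boundary_dart {v | G.dist v x ≤ k} (by simp) hy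
  have hsnd' : G.dist d.snd y ≤ k :=
    (hp d.snd (p.dart_snd_mem_support_of_mem_darts hd)).resolve_left hsnd
  calc G.dist x y
      ≤ G.dist x d.fst + (G.dist d.fst d.snd + G.dist d.snd y) :=
        hG.dist_triangle.trans (Nat.add_le_add_left hG.dist_triangle _)
    _ ≤ k + (1 + k) := by
        gcongr
        · exact dist_comm.trans_le hfst
        · exact (dist_eq_one_iff_adj.mpr d.adj).le
    _ = 2 * k + 1 := by ring

/-- Manning's bottleneck property with constant `b`, which is a natural number because graph
distances are. -/
def HasBottleneck (G : SimpleGraph V) (b : ℕ) : Prop :=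
  ∀ w w' : V, ∃ γ : G.Walk w w', ∀ v ∈ γ.support,
    ∀ p : G.Walk w w', ∃ z ∈ p.support, G.dist v z ≤ b

theorem HasBottleneck.dist_le_of_layerSetoid {b : ℕ} (hb : HasBottleneck G b) (hG : G.Connected)
    {o x y : V} (hxy : layerSetoid G (G.dist o) x y) : G.dist x y ≤ 6 * b + 1 := by
  obtain ⟨hsphere, p, hp⟩ := hxy
  obtain ⟨γ, hγ⟩ := hb x y
  obtain ⟨q, hq⟩ := hG.exists_walk_length_eq_dist o x
  obtain ⟨r, hr⟩ := hG.exists_walk_length_eq_dist o y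
  suffices hnear : ∀ v ∈ γ.support, G.dist v x ≤ 2 * b + b ∨ G.dist v y ≤ 2 * b + b by
    have := dist_le_of_walk_near_ends hG γ hnear
    omega
  intro v hv
  have hfar : G.dist o x ≤ G.dist o v + b := by
    obtain ⟨z, hz, hvz⟩ := hγ v hv p
    calc G.dist o x ≤ G.dist o z := hp z hz
      _ ≤ G.dist o v + G.dist v z := hG.dist_triangle
      _ ≤ G.dist o v + b := by gcongr
  obtain ⟨t, ht, hvt⟩ := hγ v hv (q.reverse.append r)
  rw [Walk.mem_support_append_iff, Walk.support_reverse, List.mem_reverse] at ht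
  rcases ht with htq | htr
  · exact .inl (dist_le_of_near_geodesic hG hq htq hvt hfar)
  · exact .inr (dist_le_of_near_geodesic hG hr htr hvt (hsphere ▸ hfar))

end Bottleneck

end QuasiTree

/-- **Bottleneck criterion (Manning).** For every `B > 0` there are constants `K ≥ 1`
and `C ≥ 0`, depending only on `B`, such that any connected graph `X` in which every
pair of vertices `w, w'` is joined by a walk `γ(w,w')` with the property that every
walk from `w` to `w'` passes within graph distance `B` of each vertex of `γ(w,w')`,
is `(K,C)`-quasi-isometric to a simplicial tree (a connected acyclic simple graph). -/
theorem bottleneck_quasi_tree (B : ℝ) (hB : 0 < B) :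
    ∃ K C : ℝ, 1 ≤ K ∧ 0 ≤ C ∧
      ∀ (V : Type u) (X : SimpleGraph V), X.Connected →
        (∀ w w' : V, ∃ γ : X.Walk w w', ∀ v ∈ γ.support,
          ∀ p : X.Walk w w', ∃ z ∈ p.support, (X.dist v z : ℝ) ≤ B) →
        ∃ (V' : Type u) (T : SimpleGraph V') (f : V → V'),
          T.Connected ∧ T.IsAcyclic ∧
          (∀ x y : V,
            (1 / K) * (X.dist x y : ℝ) - C ≤ (T.dist (f x) (f y) : ℝ) ∧
            (T.dist (f x) (f y) : ℝ) ≤ K * (X.dist x y : ℝ) + C) ∧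
          (∀ t : V', ∃ x : V, (T.dist t (f x) : ℝ) ≤ C) := by
  set D : ℕ := 6 * ⌊B⌋₊ + 1
  refine ⟨D + 1, D, by simp, D.cast_nonneg, fun V X hX hbot => ?_⟩
  obtain ⟨o⟩ := hX.nonempty
  have hb : QuasiTree.HasBottleneck X ⌊B⌋₊ := fun w w' =>
    (hbot w w').imp fun γ hγ v hv p => (hγ v hv p).imp fun z hz => ⟨hz.1, Nat.le_floor hz.2⟩
  let f := Quotient.mk (QuasiTree.layerSetoid X (X.dist o))
  have hf : f.Surjective := Quotient.mk_surjective
  have hD (x y : V) (hxy : f x = f y) : X.dist x y ≤ D :=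
    hb.dist_le_of_layerSetoid hX (Quotient.exact hxy)
  refine ⟨_, QuasiTree.layerGraph X (X.dist o), f, QuasiTree.connected_map hX hf,
    QuasiTree.isAcyclic_layerGraph fun a b => QuasiTree.dist_covBy_dist_of_adj o,
    QuasiTree.quasiIsometry_map_of_fiber_dist_le hX hD, hf.forall.mpr fun x => ⟨x, ?_⟩⟩
  simp
end

section
/- Let X be a connected simple graph with graph metric d, let B be a positive integer, let w,w' be vertices of X, and let w = w₀, w₁, …, w_n = w' be a walk in X such that every walk from w to w' contains, for each 0 ≤ i ≤ n, some vertex at distance at most B from w_i. Let α be a geodesic (shortest edge path) from w to w' and let m be a vertex on α satisfying |d(w,m) − d(m,w')| ≤ 1. Then there exists an index i with d(m, w_i) ≤ 2B + 1. -/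
/-!
A vertex `m` splits the geodesic `α` into two halves. The walk `p` starts near the first half, ends
near the second, and never leaves the `B`-neighbourhood of their union, so it has vertices `x`, `y`,
equal or adjacent, with `x` near a vertex `z` of the first half and `y` near a vertex `z'` of the
second. Since `m` lies between `z` and `z'`, detouring through them gives
`d(x,m) + d(m,y) ≤ d(z,z') + 2B ≤ d(x,y) + 4B ≤ 4B + 1`, so one of the two summands is at most `2B`.
-/

section

variable {V : Type*} {X : SimpleGraph V}

theorem reachable_of_mem_walk_support {u v x : V} {p : X.Walk u v} (hx : x ∈ p.support) :
    X.Reachable u x := by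
  obtain ⟨q, _, _⟩ := SimpleGraph.Walk.mem_support_iff_exists_append.1 hx
  exact q.reachable

theorem exists_mem_walk_support_dist_le_one {u v : V} (p : X.Walk u v) {S T : Set V}
    (hu : u ∈ S) (hv : v ∈ T) (hcover : ∀ x ∈ p.support, x ∈ S ∨ x ∈ T) :
    ∃ x ∈ p.support, ∃ y ∈ p.support, x ∈ S ∧ y ∈ T ∧ X.dist x y ≤ 1 := by
  by_cases hvS : v ∈ S
  · exact ⟨v, p.end_mem_support, v, p.end_mem_support, hvS, hv, by simp⟩
  · obtain ⟨d, hd, hfst, hsnd⟩ := p.exists_boundary_dart S hu hvS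
    have hsnd_mem := p.dart_snd_mem_support_of_mem_darts hd
    exact ⟨d.fst, p.dart_fst_mem_support_of_mem_darts hd, d.snd, hsnd_mem, hfst,
      (hcover d.snd hsnd_mem).resolve_left hsnd, (SimpleGraph.dist_eq_one_iff_adj.2 d.adj).le⟩

theorem dist_add_dist_eq_of_length_append_eq_dist {u m v z z' : V} {β : X.Walk u m}
    {γ : X.Walk m v} (hgeo : (β.append γ).length = X.dist u v)
    (hz : z ∈ β.support) (hz' : z' ∈ γ.support) :
    X.dist z m + X.dist m z' = X.dist z z' := by
  obtain ⟨β₁, β₂, rfl⟩ := SimpleGraph.Walk.mem_support_iff_exists_append.1 hz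
  obtain ⟨γ₁, γ₂, rfl⟩ := SimpleGraph.Walk.mem_support_iff_exists_append.1 hz'
  have hmiddle : (β₂.append γ₁).length = X.dist z z' :=
    SimpleGraph.length_eq_dist_of_subwalk hgeo
      ⟨β₁, γ₂, by simp only [SimpleGraph.Walk.append_assoc]⟩
  have hβ₂ : β₂.length = X.dist z m :=
    SimpleGraph.length_eq_dist_of_subwalk hmiddle (SimpleGraph.Walk.isSubwalk_of_append_left rfl)
  have hγ₁ : γ₁.length = X.dist m z' :=
    SimpleGraph.length_eq_dist_of_subwalk hmiddle (SimpleGraph.Walk.isSubwalk_of_append_right rfl)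
  rw [← hβ₂, ← hγ₁, ← hmiddle, SimpleGraph.Walk.length_append]

theorem dist_add_dist_le_of_dist_add_dist_eq {m x y z z' : V} (hxz : X.Reachable x z)
    (hyz' : X.Reachable y z') (hm : X.dist z m + X.dist m z' = X.dist z z') :
    X.dist x m + X.dist m y ≤ X.dist x y + 2 * (X.dist x z + X.dist y z') := by
  have hzz' : X.dist z z' ≤ X.dist x z + X.dist x y + X.dist y z' := calc
    X.dist z z' ≤ X.dist z x + X.dist x z' := hxz.symm.dist_triangle_left z'
    _ ≤ X.dist z x + (X.dist x y + X.dist y z') := by grw [hyz'.dist_triangle_right x]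
    _ = X.dist x z + X.dist x y + X.dist y z' := by rw [X.dist_comm (u := z), add_assoc]
  calc X.dist x m + X.dist m y
      ≤ (X.dist x z + X.dist z m) + (X.dist m z' + X.dist z' y) :=
        add_le_add (hxz.dist_triangle_left m) (hyz'.symm.dist_triangle_right m)
    _ = X.dist z z' + (X.dist x z + X.dist y z') := by
        rw [X.dist_comm (u := z') (v := y), ← hm]; ring
    _ ≤ X.dist x y + 2 * (X.dist x z + X.dist y z') := by omega

end

theorem midpoint_near_bottleneck_path_general {V : Type*} (X : SimpleGraph V) (B : ℕ) {w w' : V}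
    (p α : X.Walk w w') (hgeo : α.length = X.dist w w')
    (hp : ∀ i ≤ p.length, ∃ z ∈ α.support, X.dist (p.getVert i) z ≤ B)
    {m : V} (hm : m ∈ α.support) :
    ∃ i ≤ p.length, X.dist m (p.getVert i) ≤ 2 * B := by
  suffices hnear : ∃ x ∈ p.support, X.dist m x ≤ 2 * B by
    obtain ⟨x, hx, hmx⟩ := hnear
    obtain ⟨i, rfl, hi⟩ := SimpleGraph.Walk.mem_support_iff_exists_getVert.1 hx
    exact ⟨i, hi, hmx⟩
  obtain ⟨β, γ, rfl⟩ := SimpleGraph.Walk.mem_support_iff_exists_append.1 hm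
  let near (s : List V) : Set V := {x | ∃ z ∈ s, X.dist x z ≤ B}
  have hcover : ∀ x ∈ p.support, x ∈ near β.support ∨ x ∈ near γ.support := by
    intro x hx
    obtain ⟨i, rfl, hi⟩ := SimpleGraph.Walk.mem_support_iff_exists_getVert.1 hx
    obtain ⟨z, hz, hxz⟩ := hp i hi
    exact ((β.mem_support_append_iff γ).1 hz).imp (⟨z, ·, hxz⟩) (⟨z, ·, hxz⟩)
  have hw : w ∈ near β.support := ⟨w, β.start_mem_support, by simp⟩
  have hw' : w' ∈ near γ.support := ⟨w', γ.end_mem_support, by simp⟩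
  obtain ⟨x, hx, y, hy, ⟨z, hz, hxz⟩, ⟨z', hz', hyz'⟩, hxy⟩ :=
    exists_mem_walk_support_dist_le_one p hw hw' hcover
  have hxz_reach : X.Reachable x z :=
    (reachable_of_mem_walk_support hx).symm.trans (reachable_of_mem_walk_support hz)
  have hyz'_reach : X.Reachable y z' :=
    (reachable_of_mem_walk_support hy).symm.trans
      (β.reachable.trans (reachable_of_mem_walk_support hz'))
  have hsum := dist_add_dist_le_of_dist_add_dist_eq hxz_reach hyz'_reach
    (dist_add_dist_eq_of_length_append_eq_dist hgeo hz hz')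
  obtain hxm | hmy : X.dist x m ≤ 2 * B ∨ X.dist m y ≤ 2 * B := by omega
  · exact ⟨x, hx, X.dist_comm.trans_le hxm⟩
  · exact ⟨y, hy, hmy⟩

/-- Midpoints of geodesics lie near bottleneck walks: if every walk from `w` to `w'`
passes within graph distance `B` of each vertex `w_i` of a fixed walk
`w = w₀, w₁, …, w_n = w'`, and `m` is a midpoint of a geodesic from `w` to `w'`
(i.e. `|d(w,m) − d(m,w')| ≤ 1`), then `m` is within distance `2B + 1` of some `w_i`. -/
theorem midpoint_near_bottleneck_path {V : Type*} (X : SimpleGraph V)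
    (hconn : X.Connected) (B : ℕ) (hB : 0 < B) (w w' : V)
    (p : X.Walk w w')
    (hp : ∀ i ≤ p.length, ∀ q : X.Walk w w',
      ∃ z ∈ q.support, X.dist (p.getVert i) z ≤ B)
    (α : X.Walk w w') (hgeo : α.length = X.dist w w')
    (m : V) (hm : m ∈ α.support)
    (hmid : |(X.dist w m : ℤ) - (X.dist m w' : ℤ)| ≤ 1) :
    ∃ i ≤ p.length, X.dist m (p.getVert i) ≤ 2 * B + 1 := by
  obtain ⟨i, hi, hmi⟩ :=
    midpoint_near_bottleneck_path_general X B p α hgeo (fun i hi ↦ hp i hi α) hm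
  exact ⟨i, hi, hmi.trans (Nat.le_succ _)⟩
end

section
/- Let u, v ∈ ℝ² be linearly independent, and let A, B ∈ SL(2,ℝ) be matrices such that both ‖Au‖ = ‖Av‖ = ‖Au − Av‖ and ‖Bu‖ = ‖Bv‖ = ‖Bu − Bv‖ hold (Euclidean norm on ℝ²). Then B·A⁻¹ is a rotation, i.e. B·A⁻¹ is an orthogonal matrix of determinant 1: (BA⁻¹)ᵀ(BA⁻¹) = I. In other words, the matrix A making the triangle (0,u,v) equilateral is unique up to left multiplication by an element of SO(2). -/
open Matrix

/-!
Two equilateral triangles are similar, so the linear maps `A` and `B` carry `0, u, v` to similar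
triples. By polarization, `⟪B x, B y⟫ = c * ⟪A x, A y⟫` for all differences `x, y` of these points,
hence for all vectors. In matrix form `Bᵀ * B = c • (Aᵀ * A)`, so `B * A⁻¹` is orthogonal up to the
factor `c > 0`, and comparing determinants forces `c = 1`.
-/

open Set Submodule
open scoped RealInnerProductSpace Similar

section Similar

variable {ι V E F P Q : Type*}
  [SeminormedAddCommGroup E] [InnerProductSpace ℝ E]
  [SeminormedAddCommGroup F] [InnerProductSpace ℝ F]

theorem inner_vsub_vsub_eq_dist_sq [PseudoMetricSpace P] [NormedAddTorsor E P] (a b c d : P) :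
    ⟪a -ᵥ b, c -ᵥ d⟫ = (dist a d ^ 2 + dist b c ^ 2 - dist a c ^ 2 - dist b d ^ 2) / 2 := by
  have hac : dist a c = ‖(a -ᵥ d) - (c -ᵥ d)‖ := by
    rw [dist_eq_norm_vsub E, vsub_sub_vsub_cancel_right]
  have hbc : dist b c = ‖(b -ᵥ d) - (c -ᵥ d)‖ := by
    rw [dist_eq_norm_vsub E, vsub_sub_vsub_cancel_right]
  rw [hac, hbc, dist_eq_norm_vsub E a d, dist_eq_norm_vsub E b d, norm_sub_sq_real,
    norm_sub_sq_real, ← vsub_sub_vsub_cancel_right a b d, inner_sub_left]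
  ring

theorem exists_inner_vsub_vsub_eq_mul_of_similar
    [PseudoMetricSpace P] [NormedAddTorsor E P] [PseudoMetricSpace Q] [NormedAddTorsor F Q]
    {p : ι → P} {q : ι → Q} (h : q ∼ p) :
    ∃ c : ℝ, 0 < c ∧ ∀ i j k l, ⟪q i -ᵥ q j, q k -ᵥ q l⟫ = c * ⟪p i -ᵥ p j, p k -ᵥ p l⟫ := by
  obtain ⟨r, hr, hdist⟩ := h.exists_pos_dist_eq
  refine ⟨r ^ 2, pow_pos hr 2, fun i j k l ↦ ?_⟩
  simp only [inner_vsub_vsub_eq_dist_sq, hdist]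
  ring

variable [AddCommGroup V] [Module ℝ V] {f : V →ₗ[ℝ] E} {g : V →ₗ[ℝ] F}

theorem inner_map_map_eq_mul_of_span_eq_top {s : Set V} (hs : span ℝ s = ⊤) {c : ℝ}
    (h : ∀ x ∈ s, ∀ y ∈ s, ⟪g x, g y⟫ = c * ⟪f x, f y⟫) (x y : V) :
    ⟪g x, g y⟫ = c * ⟪f x, f y⟫ := by
  have hforms : (innerₗ F).compl₁₂ g g = c • (innerₗ E).compl₁₂ f f :=
    LinearMap.ext_on hs fun x hx ↦ LinearMap.ext_on hs fun y hy ↦ by simpa using h x hx y hy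
  simpa using LinearMap.congr_fun₂ hforms x y

theorem exists_inner_map_map_eq_mul_of_similar {p : ι → V} (hp : vectorSpan ℝ (range p) = ⊤)
    (h : g ∘ p ∼ f ∘ p) : ∃ c : ℝ, 0 < c ∧ ∀ x y, ⟪g x, g y⟫ = c * ⟪f x, f y⟫ := by
  obtain ⟨c, hc, hinner⟩ := exists_inner_vsub_vsub_eq_mul_of_similar h
  refine ⟨c, hc, inner_map_map_eq_mul_of_span_eq_top hp ?_⟩
  rintro _ ⟨_, ⟨i, rfl⟩, _, ⟨j, rfl⟩, rfl⟩ _ ⟨_, ⟨k, rfl⟩, _, ⟨l, rfl⟩, rfl⟩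
  simpa using hinner i j k l

end Similar

section Matrix

variable {l m n R : Type*} [Fintype n] [DecidableEq n]

theorem inner_toEuclideanLin_single [Fintype m] (A : Matrix m n ℝ) (i j : n) :
    ⟪toEuclideanLin A (EuclideanSpace.single i 1), toEuclideanLin A (EuclideanSpace.single j 1)⟫ =
      (Aᵀ * A) i j := by
  simp [PiLp.inner_apply, mul_apply, mul_comm]

theorem transpose_mul_self_eq_smul_of_inner [Fintype l] [Fintype m]
    {A : Matrix m n ℝ} {B : Matrix l n ℝ} {c : ℝ}
    (h : ∀ x y, ⟪toEuclideanLin B x, toEuclideanLin B y⟫ =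
      c * ⟪toEuclideanLin A x, toEuclideanLin A y⟫) :
    Bᵀ * B = c • (Aᵀ * A) := by
  ext i j
  simp only [Matrix.smul_apply, smul_eq_mul, ← inner_toEuclideanLin_single, h]

variable [CommRing R]

theorem transpose_mul_self_mul_inv_eq_smul_one [Fintype m] {A : Matrix n n R} {B : Matrix m n R}
    {c : R} (hA : IsUnit A.det) (h : Bᵀ * B = c • (Aᵀ * A)) :
    (B * A⁻¹)ᵀ * (B * A⁻¹) = c • 1 :=
  calc (B * A⁻¹)ᵀ * (B * A⁻¹) = A⁻¹ᵀ * (Bᵀ * B) * A⁻¹ := by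
        simp only [transpose_mul, Matrix.mul_assoc]
    _ = c • ((A * A⁻¹)ᵀ * (A * A⁻¹)) := by
        simp only [h, transpose_mul, Matrix.mul_assoc, Matrix.mul_smul, Matrix.smul_mul]
    _ = c • 1 := by rw [mul_nonsing_inv A hA, transpose_one, Matrix.mul_one]

theorem transpose_mul_self_eq_one_of_eq_smul_one [LinearOrder R] [IsStrictOrderedRing R]
    {M : Matrix n n R} {c : R} (hc : 0 ≤ c) (hM : M.det ^ 2 = 1) (h : Mᵀ * M = c • 1) :
    Mᵀ * M = 1 := by
  cases isEmpty_or_nonempty n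
  · exact Subsingleton.elim _ _
  have hpow : c ^ Fintype.card n = 1 := by
    simpa [det_mul, det_transpose, ← sq, hM] using (congrArg det h).symm
  rw [h, (pow_eq_one_iff_of_nonneg hc Fintype.card_ne_zero).1 hpow, one_smul]

theorem toLpLin_injective_of_det_ne_zero [NoZeroDivisors R] (p q : ENNReal) {A : Matrix n n R}
    (hA : A.det ≠ 0) : Function.Injective (toLpLin p q A) := fun _ _ hxy ↦
  WithLp.ofLp_injective p (mulVec_injective_of_det_ne_zero hA (congrArg WithLp.ofLp hxy))

end Matrix

theorem balance_point_unique_general {ι κ : Type*} [Fintype ι] [DecidableEq ι]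
    {p : κ → EuclideanSpace ℝ ι} (hp : vectorSpan ℝ (range p) = ⊤)
    {A B : Matrix ι ι ℝ} (hA : A.det ≠ 0) (hdet : B.det = A.det)
    (h : toEuclideanLin B ∘ p ∼ toEuclideanLin A ∘ p) :
    (B * A⁻¹)ᵀ * (B * A⁻¹) = 1 ∧ (B * A⁻¹).det = 1 := by
  have hdet_one : (B * A⁻¹).det = 1 := by
    rw [det_mul, hdet, ← det_mul, mul_nonsing_inv A hA.isUnit, det_one]
  obtain ⟨c, hc, hinner⟩ := exists_inner_map_map_eq_mul_of_similar hp h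
  have hscale : (B * A⁻¹)ᵀ * (B * A⁻¹) = c • 1 :=
    transpose_mul_self_mul_inv_eq_smul_one hA.isUnit (transpose_mul_self_eq_smul_of_inner hinner)
  exact ⟨transpose_mul_self_eq_one_of_eq_smul_one hc.le (by rw [hdet_one, one_pow]) hscale,
    hdet_one⟩

section Triangle

theorem similar_of_equilateral {P Q : Type*} [PseudoMetricSpace P] [PseudoMetricSpace Q]
    {a b c : P} {a' b' c' : Q} (hne : dist a b ≠ 0) (hne' : dist a' b' ≠ 0)
    (h₁ : dist a b = dist a c) (h₂ : dist a c = dist b c)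
    (h₁' : dist a' b' = dist a' c') (h₂' : dist a' c' = dist b' c') :
    ![a, b, c] ∼ ![a', b', c'] := by
  apply similar_of_side_side hne hne'
  · rw [← h₂', ← h₁', ← h₂, ← h₁]
  · rw [dist_comm c', dist_comm c, ← h₁', ← h₁]

theorem map_comp_zero_pair {F M N : Type*} [Zero M] [Zero N] [FunLike F M N] [ZeroHomClass F M N]
    (f : F) (u v : M) : f ∘ ![0, u, v] = ![0, f u, f v] := by
  ext i
  fin_cases i <;> simp

theorem similar_zero_pair_of_norm_eq {E F : Type*}
    [SeminormedAddCommGroup E] [SeminormedAddCommGroup F] {x y : E} {x' y' : F}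
    (hx : ‖x‖ ≠ 0) (hx' : ‖x'‖ ≠ 0) (h₁ : ‖x‖ = ‖y‖) (h₂ : ‖y‖ = ‖x - y‖)
    (h₁' : ‖x'‖ = ‖y'‖) (h₂' : ‖y'‖ = ‖x' - y'‖) :
    ![0, x, y] ∼ ![0, x', y'] := by
  apply similar_of_equilateral <;> simpa only [dist_eq_norm_sub, zero_sub, norm_neg]

theorem vectorSpan_range_zero_pair {K V : Type*} [Ring K] [AddCommGroup V] [Module K V] (u v : V) :
    vectorSpan K (range ![0, u, v]) = span K (range ![u, v]) := by
  rw [vectorSpan_range_eq_span_range_vsub_right K _ 0]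
  simp [pair_comm u 0, insert_comm v 0]

end Triangle

/-- **Uniqueness of the balance point.** If `u, v ∈ ℝ²` are linearly independent and
`A, B ∈ SL(2,ℝ)` both make the triangle `(0, u, v)` equilateral (in the Euclidean
norm), then `B·A⁻¹` is a rotation: it is orthogonal of determinant `1`. -/
theorem balance_point_unique (u v : EuclideanSpace ℝ (Fin 2))
    (h : LinearIndependent ℝ ![u, v])
    (A B : Matrix (Fin 2) (Fin 2) ℝ) (hA : A.det = 1) (hB : B.det = 1)
    (hAeq₁ : ‖Matrix.toEuclideanLin A u‖ = ‖Matrix.toEuclideanLin A v‖)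
    (hAeq₂ : ‖Matrix.toEuclideanLin A v‖ =
      ‖Matrix.toEuclideanLin A u - Matrix.toEuclideanLin A v‖)
    (hBeq₁ : ‖Matrix.toEuclideanLin B u‖ = ‖Matrix.toEuclideanLin B v‖)
    (hBeq₂ : ‖Matrix.toEuclideanLin B v‖ =
      ‖Matrix.toEuclideanLin B u - Matrix.toEuclideanLin B v‖) :
    (B * A⁻¹)ᵀ * (B * A⁻¹) = 1 ∧ (B * A⁻¹).det = 1 := by
  have hspan : vectorSpan ℝ (range ![0, u, v]) = ⊤ := by
    rw [vectorSpan_range_zero_pair]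
    exact h.span_eq_top_of_card_eq_finrank' (by simp)
  have hne {M : Matrix (Fin 2) (Fin 2) ℝ} (hM : M.det = 1) : ‖toEuclideanLin M u‖ ≠ 0 :=
    norm_ne_zero_iff.2 <| (map_ne_zero_iff _ <|
      toLpLin_injective_of_det_ne_zero 2 2 (hM ▸ one_ne_zero)).2 (h.ne_zero 0)
  have hsim : toEuclideanLin B ∘ ![0, u, v] ∼ toEuclideanLin A ∘ ![0, u, v] := by
    simpa only [map_comp_zero_pair] using
      similar_zero_pair_of_norm_eq (hne hB) (hne hA) hBeq₁ hBeq₂ hAeq₁ hAeq₂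
  exact balance_point_unique_general hspan (hA ▸ one_ne_zero) (hB.trans hA.symm) hsim
end

section
/- Let (X,d) be a metric space, let π : X → Q be a surjection onto a set Q, and define the quotient pseudo-metric d_Q(p,q) = inf Σ_{i=1}^n d(x_i,y_i), where the infimum is over all chains x₁,y₁,…,x_n,y_n in X with π(x₁) = p, π(y_n) = q, and π(y_i) = π(x_{i+1}) for 1 ≤ i < n. Let A = {a ∈ X : there exists b ≠ a with π(b) = π(a)} be the union of the non-singleton fibers of π. Suppose x ∈ X and ε > 0 satisfy d(x,a) ≥ 3ε for all a ∈ A. Then for every z ∈ X with d(x,z) ≤ ε and every y ∈ X one has min{2ε, d(z,y)} ≤ d_Q(π(z),π(y)) ≤ d(z,y). In particular, d_Q(π(z),π(y)) = d(z,y) whenever z and y both lie in the closed ε-ball around x, so π restricts to an isometry of that ball onto its image in (Q,d_Q); that is, the quotient map is a local isometry at every point far from the collapsed sets. -/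
/-- The quotient pseudo-metric associated to a surjection `π : X → Q`:
`d_Q(p,q)` is the infimum of `Σᵢ d(xᵢ, yᵢ)` over all chains
`x₁, y₁, …, x_n, y_n` in `X` with `π x₁ = p`, `π y_n = q`, and
`π yᵢ = π x_{i+1}` for `1 ≤ i < n`. -/
noncomputable def quotDist {X Q : Type*} [MetricSpace X] (π : X → Q) (p q : Q) : ℝ :=
  sInf {r : ℝ | ∃ (n : ℕ) (x y : Fin (n + 1) → X),
    π (x 0) = p ∧ π (y (Fin.last n)) = q ∧
    (∀ i : Fin n, π (y i.castSucc) = π (x i.succ)) ∧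
    r = ∑ i, dist (x i) (y i)}

/-!
A Lipschitz map that is constant on the fibers of `π` remains Lipschitz, with the same constant,
for the quotient pseudo-metric: along a chain, the jumps inside the fibers cost its image nothing.
Apply this to the truncated distance `w ↦ min (2 * ε) (dist z w)`: as `dist x z ≤ ε`, all points
of non-singleton fibers are at distance at least `2 * ε` from `z`, so the truncation makes this
function constant on fibers.
-/

theorem dist_le_sum_dist_of_chain {Y : Type*} [PseudoMetricSpace Y] {n : ℕ}
    {u v : Fin (n + 1) → Y} (hchain : ∀ i : Fin n, v i.castSucc = u i.succ) :
    dist (u 0) (v (Fin.last n)) ≤ ∑ i, dist (u i) (v i) := by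
  induction n with
  | zero => simp
  | succ n ih =>
    have hinit : dist (u 0) (v (Fin.last n).castSucc) ≤
        ∑ i : Fin (n + 1), dist (u i.castSucc) (v i.castSucc) :=
      ih (u := fun i => u i.castSucc) (v := fun i => v i.castSucc) fun i => hchain i.castSucc
    calc dist (u 0) (v (Fin.last (n + 1)))
        ≤ dist (u 0) (v (Fin.last n).castSucc) +
            dist (v (Fin.last n).castSucc) (v (Fin.last (n + 1))) := dist_triangle _ _ _
      _ = dist (u 0) (v (Fin.last n).castSucc) +
            dist (u (Fin.last (n + 1))) (v (Fin.last (n + 1))) := by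
          rw [hchain (Fin.last n), Fin.succ_last]
      _ ≤ ∑ i, dist (u i) (v i) := by
          rw [Fin.sum_univ_castSucc]
          gcongr

theorem factorsThrough_min {X Q α : Type*} [LinearOrder α] {π : X → Q} {g : X → α} {r : α}
    (h : ∀ a b : X, b ≠ a → π b = π a → r ≤ g a) :
    (fun w => min r (g w)).FactorsThrough π := by
  intro a b hab
  rcases eq_or_ne a b with rfl | hne
  · rfl
  · exact (min_eq_left (h a b hne.symm hab.symm)).trans (min_eq_left (h b a hne hab)).symm

section QuotDist

variable {X Q : Type*} [MetricSpace X] {π : X → Q}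

theorem quotDist_le_dist (a b : X) : quotDist π (π a) (π b) ≤ dist a b := by
  refine csInf_le ⟨0, ?_⟩ ⟨0, fun _ => a, fun _ => b, rfl, rfl, fun i => i.elim0, by simp⟩
  rintro _ ⟨n, u, v, -, -, -, rfl⟩
  exact Finset.sum_nonneg fun _ _ => dist_nonneg

theorem dist_le_mul_quotDist {Y : Type*} [PseudoMetricSpace Y] {K : NNReal} {f : X → Y}
    (hf : LipschitzWith K f) (hfπ : f.FactorsThrough π) (a b : X) :
    dist (f a) (f b) ≤ K * quotDist π (π a) (π b) := by
  rw [quotDist, ← smul_eq_mul, ← Real.sInf_smul_of_nonneg K.coe_nonneg]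
  refine le_csInf (Set.Nonempty.smul_set
    ⟨_, 0, fun _ => a, fun _ => b, rfl, rfl, fun i => i.elim0, rfl⟩) ?_
  rintro _ ⟨_, ⟨n, u, v, hu, hv, hchain, rfl⟩, rfl⟩
  calc dist (f a) (f b) = dist (f (u 0)) (f (v (Fin.last n))) := by rw [hfπ hu, hfπ hv]
    _ ≤ ∑ i, dist (f (u i)) (f (v i)) :=
        dist_le_sum_dist_of_chain (u := f ∘ u) (v := f ∘ v) fun i => hfπ (hchain i)
    _ ≤ ∑ i, K * dist (u i) (v i) := Finset.sum_le_sum fun i _ => hf.dist_le_mul _ _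
    _ = K * ∑ i, dist (u i) (v i) := (Finset.mul_sum _ _ _).symm

theorem min_dist_le_quotDist {r : ℝ} {z : X}
    (hfar : ∀ a b : X, b ≠ a → π b = π a → r ≤ dist z a) (y : X) :
    min r (dist z y) ≤ quotDist π (π z) (π y) := by
  have hlip : LipschitzWith 1 fun w => min r (dist z w) := (LipschitzWith.dist_right z).const_min r
  calc min r (dist z y) ≤ min r (dist z y) - min r (dist z z) := by simp
    _ ≤ dist (min r (dist z y)) (min r (dist z z)) := le_abs_self _
    _ = dist (min r (dist z z)) (min r (dist z y)) := dist_comm _ _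
    _ ≤ quotDist π (π z) (π y) := by
      simpa only [NNReal.coe_one, one_mul] using
        dist_le_mul_quotDist hlip (factorsThrough_min hfar) z y

end QuotDist

/-- The quotient map onto the quotient pseudo-metric space is a local isometry at
every point far from the collapsed sets: if all points of `A` (the union of the
non-singleton fibers of `π`) are at distance at least `3ε` from `x`, then for every
`z` with `d(x,z) ≤ ε` and every `y`, one has
`min {2ε, d(z,y)} ≤ d_Q(π z, π y) ≤ d(z,y)`; in particular `d_Q(π z, π y) = d(z,y)`
whenever `z, y` both lie in the closed `ε`-ball around `x`. -/
theorem quotDist_local_isometry {X Q : Type*} [MetricSpace X] (π : X → Q)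
    (hsurj : Function.Surjective π) (x : X) (ε : ℝ) (hε : 0 < ε)
    (hfar : ∀ a : X, (∃ b : X, b ≠ a ∧ π b = π a) → 3 * ε ≤ dist x a) :
    (∀ z y : X, dist x z ≤ ε →
        min (2 * ε) (dist z y) ≤ quotDist π (π z) (π y) ∧
        quotDist π (π z) (π y) ≤ dist z y) ∧
    (∀ z y : X, dist x z ≤ ε → dist x y ≤ ε →
        quotDist π (π z) (π y) = dist z y) := by
  have hbounds : ∀ z y : X, dist x z ≤ ε →
      min (2 * ε) (dist z y) ≤ quotDist π (π z) (π y) ∧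
      quotDist π (π z) (π y) ≤ dist z y := by
    intro z y hz
    refine ⟨min_dist_le_quotDist (fun a b hne hab => ?_) y, quotDist_le_dist z y⟩
    linarith [hfar a ⟨b, hne, hab⟩, dist_triangle x z a]
  refine ⟨hbounds, fun z y hz hy => ?_⟩
  obtain ⟨hlower, hupper⟩ := hbounds z y hz
  have hzy : dist z y ≤ 2 * ε := by linarith [dist_triangle_left z y x]
  rw [min_eq_right hzy] at hlower
  exact hupper.antisymm hlower
end
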